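/- On the event E, assume the learnable-only regime p_un = 0 (i.e., S_U = ∅) and Condition (H). Then for every iteration t ≤ T the noise coefficients satisfy max over i ∈ [N], j ≠ s(X_i), r ∈ [m] of ρ_{i,j,r}^{(t)} ≤ 200·exp(2C_0³)·log(16NmP/δ)·σ_0σ_n²d/(N(α−ε)³), and consequently every noise response remains at the initialization scale: |⟨w_r^{(t)}, x_{i,j}⟩| ≤ 3σ_0σ_n√(d·log(16NmP/δ)) for all i ∈ [N], j ≠ s(X_i), r ∈ [m], t ≤ T. -/

import Mathlib

open Finset MeasureTheory ProbabilityTheory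
open scoped ENNReal NNReal

noncomputable section

namespace AD

/-- Cubic ReLU activation. -/
def phi (z : ℝ) : ℝ := (max 0 z) ^ 3

/-- Negative sigmoid `ψ(z) = 1/(1+e^z)`. -/
def psi (z : ℝ) : ℝ := 1 / (1 + Real.exp z)

/-- Logistic loss `ℓ(z) = log(1+e^{-z})`. -/
def lloss (z : ℝ) : ℝ := Real.log (1 + Real.exp (-z))

/-- Logistic sigmoid `σ(z) = 1/(1+e^{-z})`. -/
def sigm (z : ℝ) : ℝ := 1 / (1 + Real.exp (-z))

/-- Euclidean inner product on `Fin d → ℝ`. -/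
def dot {d : ℕ} (a b : Fin d → ℝ) : ℝ := ∑ k, a k * b k

/-- Squared Euclidean norm. -/
def sqnorm {d : ℕ} (a : Fin d → ℝ) : ℝ := dot a a

/-- First standard basis vector `e₁` (the learnable feature `u`). -/
def e1 (d : ℕ) (hd : 0 < d) : Fin d → ℝ := fun k => if k = (⟨0, hd⟩ : Fin d) then 1 else 0

/-- Last standard basis vector `e_d` (the unlearnable feature `v`). -/
def eLast (d : ℕ) (_hd : 0 < d) : Fin d → ℝ := fun k => if (k : ℕ) = d - 1 then 1 else 0

/-- The two-layer student network
`f_W(X) = ∑_r ∑_p [φ(⟨w_r,x_p⟩) − φ(−⟨w_r,x_p⟩)]`. -/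
def netOut {m P d : ℕ} (w : Fin m → Fin d → ℝ) (X : Fin P → Fin d → ℝ) : ℝ :=
  ∑ r, ∑ p, (phi (dot (w r) (X p)) - phi (-(dot (w r) (X p))))

/-- The concentration event `E` of the paper, i.e. properties (P1)–(P8), stated for
training patches `x`, initialization `w0`, labels `y` and signal-patch indices `sig`. -/
def EventEOn (N m P d : ℕ) (hd : 0 < d) (sigman sigma0 delta : ℝ)
    (y : Fin N → ℝ) (sig : Fin N → Fin P)
    (x : Fin N → Fin P → Fin d → ℝ) (w0 : Fin m → Fin d → ℝ) : Prop :=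
  -- (P1) noise-patch norms
  (∀ i j, j ≠ sig i →
      sigman ^ 2 * d / 2 ≤ sqnorm (x i j) ∧ sqnorm (x i j) ≤ 3 * sigman ^ 2 * d / 2) ∧
  -- (P2) pairwise noise inner products
  (∀ i k j q, j ≠ sig i → q ≠ sig k → ((i, j) : Fin N × Fin P) ≠ (k, q) →
      |dot (x i j) (x k q)| ≤
        2 * sigman ^ 2 * Real.sqrt ((d : ℝ) * Real.log ((16 : ℝ) * N ^ 2 * P ^ 2 / delta))) ∧
  -- (P3) sup-norm of noise patches
  (∀ i j, j ≠ sig i → ∀ kk : Fin d,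
      |x i j kk| ≤ sigman * Real.sqrt (2 * Real.log ((16 : ℝ) * d * N * P / delta))) ∧
  -- (P4) initialization norms
  (∀ r, Real.sqrt (sqnorm (w0 r)) ≤ 2 * sigma0 * Real.sqrt d) ∧
  -- (P5) initialization signal correlation
  (∀ r, |dot (w0 r) (e1 d hd)| ≤ sigma0 * Real.sqrt (2 * Real.log ((16 : ℝ) * m / delta))) ∧
  -- (P6) initialization noise correlations
  (∀ r i j, j ≠ sig i →
      |dot (w0 r) (x i j)| ≤
        2 * sigma0 * sigman * Real.sqrt ((d : ℝ) * Real.log ((16 : ℝ) * N * m * P / delta))) ∧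
  -- (P7) maximal initial signal alignment
  (∃ r, sigma0 / 2 ≤ dot (w0 r) (e1 d hd)) ∧
  -- (P8) maximal initial noise alignment
  (∀ i j, j ≠ sig i → ∃ r, sigma0 * sigman * Real.sqrt d / 4 ≤ y i * dot (w0 r) (x i j))
structure Setting where
  N : ℕ
  m : ℕ
  P : ℕ
  d : ℕ
  T : ℕ
  hN : 0 < N
  hm : 0 < m
  hP : 0 < P
  hd : 0 < d
  alpha : ℝ
  sigman : ℝ
  sigma0 : ℝ
  eta : ℝ
  eps : ℝ
  delta : ℝ
  halpha : 0 < alpha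
  hsigman : 0 < sigman
  hsigma0 : 0 < sigma0
  heta : 0 < eta
  heps : 0 < eps
  hepsalpha : eps < alpha
  hdelta0 : 0 < delta
  hdelta1 : delta < 1
  /-- labels -/
  y : Fin N → ℝ
  hy : ∀ i, y i = 1 ∨ y i = -1
  /-- signal patch index -/
  sig : Fin N → Fin P
  /-- learnable samples -/
  SL : Finset (Fin N)
  /-- unlearnable samples -/
  SU : Finset (Fin N)
  hunion : SL ∪ SU = Finset.univ
  hdisj : Disjoint SL SU
  /-- training patches -/
  x : Fin N → Fin P → Fin d → ℝ
  hsigL : ∀ i ∈ SL, x i (sig i) = (alpha * y i) • e1 d hd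
  hsigU : ∀ i ∈ SU, x i (sig i) = (alpha * y i) • eLast d hd
  hnoiseU : ∀ i j, j ≠ sig i → dot (x i j) (e1 d hd) = 0
  hnoiseV : ∀ i j, j ≠ sig i → dot (x i j) (eLast d hd) = 0
  /-- weight trajectory -/
  w : ℕ → Fin m → Fin d → ℝ
  hwperp : ∀ t r, dot (w t r) (eLast d hd) = 0
  /-- adversarial training examples at each iteration -/
  xadv : ℕ → Fin N → Fin P → Fin d → ℝ
  hadvnoise : ∀ t i j, j ≠ sig i → xadv t i j = x i j
  hadvspan : ∀ t i, ∃ c : ℝ, xadv t i (sig i) - x i (sig i) = c • x i (sig i)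
  hadvlinf : ∀ t i p k, |xadv t i p k - x i p k| ≤ eps
  hadvlearn : ∀ t : ℕ, ∀ i ∈ SL,
    alpha - eps ≤ y i * dot (xadv t i (sig i)) (e1 d hd) ∧
      y i * dot (xadv t i (sig i)) (e1 d hd) ≤ alpha

namespace Setting

variable (S : Setting)

/-- Adversarial margin `y_i f_{W^{(t)}}(X̃_i^{(t)})`. -/
def marg (t : ℕ) (i : Fin S.N) : ℝ := S.y i * netOut (S.w t) (S.xadv t i)

/-- Signal coordinate `w_{r,1}^{(t)}`. -/
def wsig (t : ℕ) (r : Fin S.m) : ℝ := S.w t r ⟨0, S.hd⟩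

/-- Unlearnable fraction `p_un = |S_U|/N`. -/
def pun : ℝ := (S.SU.card : ℝ) / S.N

/-- The adversarial-training gradient-descent dynamics. -/
def ATDyn : Prop :=
  ∀ t r, S.w (t + 1) r = S.w t r +
    (3 * S.eta / S.N) •
      ∑ i : Fin S.N, (psi (S.marg t i) * S.y i) •
        ∑ p : Fin S.P, (dot (S.w t r) (S.xadv t i p)) ^ 2 • S.xadv t i p

/-- The signed gradient weight of sample `i` at iteration `t` under adversarial
distillation from teacher logits `fT`. -/
def gAD (fT : Fin S.N → ℝ) (t : ℕ) (i : Fin S.N) : ℝ :=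
  sigm (S.y i * fT i) * psi (S.marg t i) - sigm (-(S.y i * fT i)) * psi (-(S.marg t i))

/-- The adversarial-distillation gradient-descent dynamics. -/
def ADDyn (fT : Fin S.N → ℝ) : Prop :=
  ∀ t r, S.w (t + 1) r = S.w t r +
    (3 * S.eta / S.N) •
      ∑ i : Fin S.N, (S.gAD fT t i * S.y i) •
        ∑ p : Fin S.P, (dot (S.w t r) (S.xadv t i p)) ^ 2 • S.xadv t i p

/-- Noise coefficients `ρ_{i,j,r}^{(t)}` (adversarial training). -/
def rho (i : Fin S.N) (j : Fin S.P) (r : Fin S.m) : ℕ → ℝ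
  | 0 => 0
  | t + 1 => rho i j r t + (3 * S.eta / S.N) * psi (S.marg t i) * (dot (S.w t r) (S.x i j)) ^ 2

/-- Noise coefficients under adversarial distillation. -/
def rhoAD (fT : Fin S.N → ℝ) (i : Fin S.N) (j : Fin S.P) (r : Fin S.m) : ℕ → ℝ
  | 0 => 0
  | t + 1 => rhoAD fT i j r t + (3 * S.eta / S.N) * S.gAD fT t i * (dot (S.w t r) (S.x i j)) ^ 2

/-- The event `E` for a setting. -/
def EventE : Prop :=
  EventEOn S.N S.m S.P S.d S.hd S.sigman S.sigma0 S.delta S.y S.sig S.x (S.w 0)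

/-- Condition (H): the parameter requirements of Condition 4.1 of the paper
(without the unlearnable-fraction regime item, which is imposed separately). -/
def CondH (C : ℝ) : Prop :=
  1 ≤ C ∧
  -- training horizon
  C * S.N / (S.eta * S.sigma0 * S.sigman ^ 3 * ((S.d : ℝ) * Real.sqrt S.d)) ≤ (S.T : ℝ) ∧
  -- dimension
  C * S.m ^ 2 * S.P ^ 2 * S.N ^ 2 *
      (Real.log ((S.T : ℝ) * S.N * S.m * S.P / S.delta)) ^ 4 ≤ (S.d : ℝ) ∧
  -- signal strength
  C * S.sigman * Real.sqrt S.d * Real.log ((S.T : ℝ) * S.N * S.m * S.P / S.delta) /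
      (((S.N : ℝ) * (1 - S.pun)) ^ ((1 : ℝ) / 3)) ≤ S.alpha ∧
  -- initialization scale
  S.sigma0 ≤
    C⁻¹ *
        min (min (1 / ((S.m : ℝ) ^ ((2 : ℝ) / 3) * (S.P : ℝ) ^ ((2 : ℝ) / 3) *
            S.sigman * Real.sqrt S.d))
          (1 / (S.alpha * (S.m : ℝ) ^ ((2 : ℝ) / 3))))
          (1 / (S.sigman * S.m ^ 2 * Real.sqrt S.P * S.d)) /
      Real.log ((S.T : ℝ) * S.d * S.N * S.m * S.P / S.delta) ∧
  -- learning rate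
  S.eta ≤
    C⁻¹ * min (min (1 / (S.alpha ^ 3 * S.sigma0)) (1 / (S.sigman ^ 2 * S.d))) (1 / S.alpha ^ 2) /
      Real.log ((S.T : ℝ) * S.N * S.m * S.P / S.delta) ∧
  -- adversarial budget
  C * S.sigman * S.m * Real.sqrt S.P * Real.log ((S.T : ℝ) * S.d * S.N * S.P / S.delta) ≤ S.eps ∧
  S.eps < C⁻¹ * min S.alpha (1 / (S.m * S.sigma0 * S.d)) ∧
  -- width and number of patches
  C * Real.log ((S.N : ℝ) * S.P / S.delta) ≤ (S.m : ℝ) ∧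
  (S.m : ℝ) ≤ C * Real.log S.d ^ C ∧
  2 ≤ S.P ∧ (S.P : ℝ) ≤ C

/-- The sparse-unlearnable regime of Condition 4.1. -/
def SparseRegime (C : ℝ) : Prop :=
  C / S.N ≤ S.pun ∧ S.pun ≤ C⁻¹ * Real.log S.d / S.N ∧
  C * S.m * S.P * Real.log ((S.T : ℝ) * S.d * S.N * S.m * S.P / S.delta) ≤ (S.N : ℝ)

/-- The noise-stability bound (NS) on learnable samples at iteration `t`. -/
def NS (t : ℕ) : Prop :=
  ∀ r : Fin S.m, ∀ i ∈ S.SL, ∀ j, j ≠ S.sig i →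
    |dot (S.w t r) (S.x i j)| ≤
      3 * S.sigma0 * S.sigman *
          Real.sqrt ((S.d : ℝ) * Real.log ((16 : ℝ) * S.N * S.m * S.P / S.delta)) +
        21 * S.pun * S.N * S.P * Real.log S.T ^ ((1 : ℝ) / 3) / Real.sqrt S.d *
          Real.sqrt (Real.log ((16 : ℝ) * S.N ^ 2 * S.P ^ 2 / S.delta))

/-- The signal-learning hitting time `T₀`. -/
def T0 (C0 : ℝ) : ℕ :=
  sInf {t : ℕ | ∃ r, C0 / (S.alpha * (S.m : ℝ) ^ ((1 : ℝ) / 3)) < S.wsig t r}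

/-- Maximum of the noise coefficients over unlearnable noise patches. -/
def rhoMaxSU (t : ℕ) : ℝ :=
  sSup {z : ℝ | ∃ r : Fin S.m, ∃ k ∈ S.SU, ∃ q, q ≠ S.sig k ∧ z = S.rho k q r t}

/-- Shifted noise coefficients `ρ̂_{i,j,r}^{(t)}`. -/
def rhoHat (i : Fin S.N) (j : Fin S.P) (r : Fin S.m) (t : ℕ) : ℝ :=
  S.rho i j r t + S.y i * dot (S.w 0 r) (S.x i j) / sqnorm (S.x i j)

/-- Maximum shifted noise coefficient over unlearnable noise patches. -/
def rhoHatMax (t : ℕ) : ℝ :=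
  sSup {z : ℝ | ∃ r : Fin S.m, ∃ k ∈ S.SU, ∃ q, q ≠ S.sig k ∧ z = S.rhoHat k q r t}

/-- The noise-memorization hitting time `T₁`. -/
def T1 (C1 : ℝ) : ℕ :=
  sInf {t : ℕ | C1 / (((S.m : ℝ) * S.P) ^ ((1 : ℝ) / 3) * S.sigman ^ 2 * S.d) < S.rhoHatMax t}

/-- The Good-Teacher horizon `T_max`. -/
def Tmax : ℝ :=
  S.N / (1000 * S.eta * S.m * S.P * S.sigma0 ^ 4 * S.sigman ^ 6 * (S.d : ℝ) ^ 3 *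
    Real.log ((16 : ℝ) * S.N * S.m * S.P / S.delta) ^ 2)

end Setting

theorem phi_sub_phi_neg (z : ℝ) : phi z - phi (-z) = z ^ 3 := by
  unfold phi
  rcases le_total 0 z with h | h
  · rw [max_eq_right h, max_eq_left (by linarith)]; ring
  · rw [max_eq_left h, max_eq_right (by linarith)]; ring

theorem psi_pos (z : ℝ) : 0 < psi z := by
  unfold psi; positivity

theorem psi_le_exp_neg (z : ℝ) : psi z ≤ Real.exp (-z) := by
  unfold psi
  rw [Real.exp_neg, ← one_div]
  exact one_div_le_one_div_of_le (Real.exp_pos z) (by linarith)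

/-- Margins that differ by at most `c` have comparable loss derivatives. -/
theorem psi_le_exp_mul_psi {z z' c : ℝ} (hc : 0 ≤ c) (h : z' ≤ z + c) :
    psi z ≤ Real.exp c * psi z' := by
  unfold psi
  rw [mul_one_div, div_le_div_iff₀ (by positivity) (by positivity), one_mul]
  have h1 : Real.exp z' ≤ Real.exp c * Real.exp z := by
    rw [← Real.exp_add]; exact Real.exp_le_exp.2 (by linarith)
  have h2 : 1 ≤ Real.exp c := Real.one_le_exp hc
  nlinarith

theorem mul_exp_neg_cube_le_one {b : ℝ} (hb : 0 ≤ b) : b * Real.exp (-b ^ 3) ≤ 1 := by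
  rw [Real.exp_neg, ← div_eq_mul_inv, div_le_one (Real.exp_pos _)]
  have h := Real.add_one_le_exp (b ^ 3)
  nlinarith [mul_nonneg hb (sq_nonneg (b - 1)), sq_nonneg (b - 1)]

theorem sq_mul_exp_sub_cube_le {b : ℝ} (hb : -1 ≤ b) :
    b ^ 2 * Real.exp (b - b ^ 3) ≤ Real.exp 2 := by
  rcases le_total 0 b with h | h
  · have h1 : b ≤ Real.exp b := by linarith [Real.add_one_le_exp b]
    have h2 : b ^ 2 ≤ Real.exp (2 * b) := by
      rw [two_mul, Real.exp_add, sq]; exact mul_self_le_mul_self h h1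
    calc b ^ 2 * Real.exp (b - b ^ 3) ≤ Real.exp (2 * b) * Real.exp (b - b ^ 3) := by gcongr
      _ = Real.exp (2 * b + (b - b ^ 3)) := (Real.exp_add _ _).symm
      _ ≤ Real.exp 2 := Real.exp_le_exp.2 (by
        nlinarith [mul_nonneg (sq_nonneg (b - 1)) h, sq_nonneg (b - 1)])
  · have h1 : b ^ 2 ≤ 1 := by nlinarith
    have h2 : Real.exp (b - b ^ 3) ≤ Real.exp 2 :=
      Real.exp_le_exp.2 (by nlinarith)
    nlinarith [Real.exp_pos (b - b ^ 3)]

theorem sq_mul_exp_neg_cube_le {b : ℝ} (hb : -1 ≤ b) :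
    b ^ 2 * Real.exp (-b ^ 3) ≤ Real.exp 2 := by
  rcases le_total 0 b with h | h
  · refine le_trans ?_ (sq_mul_exp_sub_cube_le hb)
    have : Real.exp (-b ^ 3) ≤ Real.exp (b - b ^ 3) := Real.exp_le_exp.2 (by linarith)
    gcongr
  · have h1 : b ^ 2 ≤ 1 := by nlinarith
    have h2 : Real.exp (-b ^ 3) ≤ Real.exp 2 := Real.exp_le_exp.2 (by nlinarith)
    nlinarith [Real.exp_pos (-b ^ 3)]

/-- The reciprocal of a positive solution of `u ↦ u + s u²` controls the total step size. -/
theorem sum_step_le_two_div {u s : ℕ → ℝ} {t₀ t : ℕ} (h : t₀ ≤ t)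
    (hs : ∀ τ, 0 ≤ s τ) (hu : ∀ τ, u (τ + 1) = u τ + s τ * u τ ^ 2) (h0 : 0 < u t₀)
    (hsu : ∀ τ, τ < t → 0 ≤ u τ → s τ * u τ ≤ 1) :
    ∑ τ ∈ Finset.Ico t₀ t, s τ ≤ 2 / u t₀ := by
  have key : 0 < u t ∧ ∑ τ ∈ Finset.Ico t₀ t, s τ ≤ 2 / u t₀ - 2 / u t := by
    induction t, h using Nat.le_induction with
    | base => simp [h0]
    | succ n hn ih =>
      obtain ⟨hpos, ih⟩ := ih fun τ hτ => hsu τ (by omega)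
      have h1 := hsu n (by omega) hpos.le
      have hs' := hs n
      have h2 : 0 < 1 + s n * u n := by positivity
      have h3 : u (n + 1) = u n * (1 + s n * u n) := by rw [hu]; ring
      have hpos' : 0 < u (n + 1) := by rw [h3]; positivity
      refine ⟨hpos', ?_⟩
      rw [Finset.sum_Ico_succ_top hn]
      have h4 : s n ≤ 2 / u n - 2 / u (n + 1) := by
        rw [h3]
        have : 2 / u n - 2 / (u n * (1 + s n * u n)) = 2 * s n / (1 + s n * u n) := by
          field_simp; ring
        rw [this, le_div_iff₀ h2]
        nlinarith
      linarith
  have : 0 < 2 / u t := div_pos two_pos key.1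
  linarith [key.2]

/-- Logarithmic growth of a sequence whose increments decay exponentially. -/
theorem exp_le_exp_zero_add {b q : ℕ → ℝ} {t : ℕ} (hb : ∀ τ, b (τ + 1) = b τ + q τ)
    (hq0 : ∀ τ, 0 ≤ q τ) (hq1 : ∀ τ < t, q τ ≤ 1)
    (hq : ∀ τ < t, q τ * Real.exp (b τ) ≤ 1 / 2) :
    ∀ τ ≤ t, Real.exp (b τ) ≤ Real.exp (b 0) + τ := by
  intro τ
  induction τ with
  | zero => intro _; simp
  | succ n ih =>
    intro hn
    have h1 := ih (by omega)
    have h2 := hq1 n (by omega)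
    have h3 := hq n (by omega)
    have h5 : Real.exp (q n) ≤ 1 + 2 * q n := by
      have := Real.abs_exp_sub_one_le (x := q n) (by rw [abs_of_nonneg (hq0 n)]; exact h2)
      rw [abs_of_nonneg (hq0 n)] at this
      linarith [(abs_le.1 this).2]
    rw [hb, Real.exp_add]
    push_cast
    nlinarith [mul_le_mul_of_nonneg_left h5 (Real.exp_pos (b n)).le]

/-- Hypotheses on the one-dimensional signal dynamics up to time `t`: `u τ r` is the signal
coordinate of neuron `r`, `a τ i` the perturbed signal strength of sample `i` and `marg τ i` its
margin. -/
structure SignalDyn (N m : ℕ) (α β η σ ν : ℝ) (t : ℕ) (u : ℕ → Fin m → ℝ)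
    (a marg : ℕ → Fin N → ℝ) : Prop where
  hN : 0 < N
  hβ : 0 < β
  hβα : β ≤ α
  hα2β : α ≤ 2 * β
  hη : 0 < η
  hσ : 0 < σ
  ha : ∀ τ i, β ≤ a τ i ∧ a τ i ≤ α
  hstep : ∀ τ r, u (τ + 1) r =
    u τ r + (3 * η / N * ∑ i, psi (marg τ i) * a τ i ^ 3) * u τ r ^ 2
  hmarg : ∀ τ < t, ∀ i, |marg τ i - a τ i ^ 3 * ∑ r, u τ r ^ 3| ≤ 1
  hν : 0 ≤ ν
  hu0 : ∀ r, |u 0 r| ≤ ν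
  hmν : m * (α * ν) ^ 3 ≤ 1
  hinit : ∃ r, σ / 2 ≤ u 0 r
  hηα : 12 * Real.exp 4 * (η * α ^ 2) ≤ 1
  hspread : 12 * (α - β) * m * σ * N * Real.log (3 + t) ^ 2 ≤ 1

namespace SignalDyn

variable {N m : ℕ} {α β η σ ν : ℝ} {t : ℕ} {u : ℕ → Fin m → ℝ} {a marg : ℕ → Fin N → ℝ}

theorem step_nonneg (D : SignalDyn N m α β η σ ν t u a marg) (τ : ℕ) :
    0 ≤ 3 * η / N * ∑ i, psi (marg τ i) * a τ i ^ 3 := by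
  have := D.hη
  refine mul_nonneg (by positivity) (Finset.sum_nonneg fun i _ => ?_)
  have h1 : 0 < a τ i := D.hβ.trans_le (D.ha τ i).1
  have := psi_pos (marg τ i)
  positivity

theorem mono (D : SignalDyn N m α β η σ ν t u a marg) (r : Fin m) : Monotone fun τ => u τ r := by
  refine monotone_nat_of_le_succ fun τ => ?_
  rw [D.hstep]
  have := mul_nonneg (D.step_nonneg τ) (sq_nonneg (u τ r))
  linarith

theorem neg_le (D : SignalDyn N m α β η σ ν t u a marg) (τ : ℕ) (r : Fin m) : -ν ≤ u τ r :=
  (abs_le.1 (D.hu0 r)).1.trans (D.mono r (Nat.zero_le τ))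

theorem mul_nu_le_one (D : SignalDyn N m α β η σ ν t u a marg) : α * ν ≤ 1 := by
  obtain ⟨r, -⟩ := D.hinit
  have hm : (1 : ℝ) ≤ m := by
    have : 0 < m := r.pos
    exact_mod_cast this
  have h0 : 0 ≤ α * ν := mul_nonneg (D.hβ.le.trans D.hβα) D.hν
  have h1 := D.hmν
  by_contra! h
  have h2 : 1 < (α * ν) ^ 3 := one_lt_pow₀ h (by norm_num)
  nlinarith

theorem neg_one_le (D : SignalDyn N m α β η σ ν t u a marg) (τ : ℕ) (r : Fin m) :
    -1 ≤ β * u τ r := by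
  have h1 := D.neg_le τ r
  have h2 := D.mul_nu_le_one
  have h3 := mul_le_mul_of_nonneg_right D.hβα D.hν
  nlinarith [D.hβ]

/-- Each neuron lower-bounds every margin. -/
theorem cube_le_marg (D : SignalDyn N m α β η σ ν t u a marg) {τ : ℕ} (hτ : τ < t) (i : Fin N)
    (r : Fin m) : (β * u τ r) ^ 3 - 2 ≤ marg τ i := by
  have hα : 0 < α := D.hβ.trans_le D.hβα
  obtain ⟨ha1, ha2⟩ := D.ha τ i
  have ha0 : 0 < a τ i := D.hβ.trans_le ha1
  have hlow : ∀ r', -(α * ν) ^ 3 ≤ (a τ i * u τ r') ^ 3 := by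
    intro r'
    have h1 : -(α * ν) ≤ a τ i * u τ r' := by
      have := D.neg_le τ r'
      have h3 := mul_le_mul_of_nonneg_right ha2 D.hν
      nlinarith
    calc -(α * ν) ^ 3 = (-(α * ν)) ^ 3 := by ring
      _ ≤ _ := Odd.pow_le_pow (by decide) |>.2 h1
  have hαν : 0 ≤ (α * ν) ^ 3 := pow_nonneg (mul_nonneg hα.le D.hν) 3
  have hsum : (β * u τ r) ^ 3 - m * (α * ν) ^ 3 ≤ ∑ r', (a τ i * u τ r') ^ 3 := by
    have h1 : ∑ r', ((a τ i * u τ r') ^ 3 + (α * ν) ^ 3) ≥ (β * u τ r) ^ 3 := by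
      have h0 : ∀ r' ∈ Finset.univ, 0 ≤ (a τ i * u τ r') ^ 3 + (α * ν) ^ 3 :=
        fun r' _ => by linarith [hlow r']
      rcases le_total 0 (u τ r) with h | h
      · have h2 := Finset.single_le_sum h0 (Finset.mem_univ r)
        have h3 : (β * u τ r) ^ 3 ≤ (a τ i * u τ r) ^ 3 := by
          have := D.hβ
          gcongr
        linarith
      · have h2 := Finset.sum_nonneg h0
        have h3 : (β * u τ r) ^ 3 ≤ 0 :=
          Odd.pow_nonpos (by decide) (mul_nonpos_of_nonneg_of_nonpos D.hβ.le h)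
        linarith
    rw [Finset.sum_add_distrib] at h1
    simp at h1
    linarith
  have h4 := (abs_le.1 (D.hmarg τ hτ i)).1
  have h5 : a τ i ^ 3 * ∑ r, u τ r ^ 3 = ∑ r', (a τ i * u τ r') ^ 3 := by
    rw [Finset.mul_sum]; exact Finset.sum_congr rfl fun r' _ => by ring
  linarith [D.hmν]

theorem step_le (D : SignalDyn N m α β η σ ν t u a marg) {τ : ℕ} (hτ : τ < t) (r : Fin m) :
    3 * η / N * ∑ i, psi (marg τ i) * a τ i ^ 3 ≤
      3 * η * α ^ 3 * Real.exp 2 * Real.exp (-(β * u τ r) ^ 3) := by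
  have hN : (0 : ℝ) < N := by exact_mod_cast D.hN
  have hη := D.hη
  have h1 : ∀ i ∈ Finset.univ, psi (marg τ i) * a τ i ^ 3 ≤
      Real.exp 2 * Real.exp (-(β * u τ r) ^ 3) * α ^ 3 := by
    intro i _
    have ha0 : 0 < a τ i := D.hβ.trans_le (D.ha τ i).1
    have h2 : psi (marg τ i) ≤ Real.exp 2 * Real.exp (-(β * u τ r) ^ 3) := by
      refine (psi_le_exp_neg _).trans ?_
      rw [← Real.exp_add]
      exact Real.exp_le_exp.2 (by linarith [D.cube_le_marg hτ i r])
    have := (D.ha τ i).2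
    gcongr
  have h3 := Finset.sum_le_sum h1
  rw [Finset.sum_const, Finset.card_univ, Fintype.card_fin, nsmul_eq_mul] at h3
  calc _ ≤ 3 * η / N * (N * (Real.exp 2 * Real.exp (-(β * u τ r) ^ 3) * α ^ 3)) := by gcongr
    _ = _ := by field_simp

theorem step_coeff_le (D : SignalDyn N m α β η σ ν t u a marg) :
    3 * η * α ^ 3 * Real.exp 2 * Real.exp 2 ≤ β / 2 := by
  have h := D.hηα
  have hα : 0 < α := D.hβ.trans_le D.hβα
  have h2 : Real.exp 2 * Real.exp 2 = Real.exp 4 := by rw [← Real.exp_add]; norm_num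
  rw [← h2] at h
  have h3 := mul_le_mul_of_nonneg_right h hα.le
  have := D.hα2β
  linarith

theorem step_mul_le_one (D : SignalDyn N m α β η σ ν t u a marg) {τ : ℕ} (hτ : τ < t)
    (r : Fin m) (h0 : 0 ≤ u τ r) :
    (3 * η / N * ∑ i, psi (marg τ i) * a τ i ^ 3) * u τ r ≤ 1 := by
  have h1 := mul_exp_neg_cube_le_one (mul_nonneg D.hβ.le h0)
  have h2 := D.step_le hτ r
  have hc := D.step_coeff_le
  have hη := D.hη
  have hβ := D.hβ
  have hα : 0 < α := D.hβ.trans_le D.hβα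
  set c := 3 * η * α ^ 3 * Real.exp 2 with hcdef
  have hc0 : 0 < c := by positivity
  have he : (1 : ℝ) ≤ Real.exp 2 := Real.one_le_exp (by norm_num)
  have hcβ : c ≤ β := by nlinarith
  have h3 := mul_le_mul_of_nonneg_right h2 h0
  have h4 := mul_le_mul_of_nonneg_left h1 hc0.le
  have h5 : β * ((3 * η / N * ∑ i, psi (marg τ i) * a τ i ^ 3) * u τ r) ≤ β * 1 := by
    have := mul_le_mul_of_nonneg_left h3 hβ.le
    calc _ ≤ _ := this
      _ = c * (β * u τ r * Real.exp (-(β * u τ r) ^ 3)) := by ring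
      _ ≤ _ := by linarith
  exact le_of_mul_le_mul_left h5 hβ

theorem sum_step_le (D : SignalDyn N m α β η σ ν t u a marg) {t₀ : ℕ} (h : t₀ ≤ t) (r : Fin m)
    (h0 : 0 < u t₀ r) :
    ∑ τ ∈ Finset.Ico t₀ t, (3 * η / N * ∑ i, psi (marg τ i) * a τ i ^ 3) ≤ 2 / u t₀ r :=
  sum_step_le_two_div (u := fun τ => u τ r) h D.step_nonneg (fun τ => D.hstep τ r) h0
    fun _ hτ h' => D.step_mul_le_one hτ r h'

theorem mul_le_log (D : SignalDyn N m α β η σ ν t u a marg) {τ : ℕ} (hτ : τ ≤ t) (r : Fin m) :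
    β * u τ r ≤ Real.log (3 + t) := by
  have hβ := D.hβ
  have hc := D.step_coeff_le
  have hα : 0 < α := D.hβ.trans_le D.hβα
  have hη := D.hη
  set c := 3 * η * α ^ 3 * Real.exp 2 with hcdef
  have hc0 : 0 < c := by positivity
  have hq : ∀ τ < t, ∀ x : ℝ, 0 ≤ x → (β * u τ r) ^ 2 * Real.exp (-(β * u τ r) ^ 3) * x
      ≤ Real.exp 2 →
      β * ((3 * η / N * ∑ i, psi (marg τ i) * a τ i ^ 3) * u τ r ^ 2) * x ≤ 1 / 2 := by
    intro τ hτ x hx h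
    have h2 := D.step_le hτ r
    have h3 := mul_le_mul_of_nonneg_right h2 (mul_nonneg (sq_nonneg (β * u τ r)) hx)
    have h4 := mul_le_mul_of_nonneg_left h hc0.le
    refine le_of_mul_le_mul_left ?_ hβ
    calc β * (β * ((3 * η / N * ∑ i, psi (marg τ i) * a τ i ^ 3) * u τ r ^ 2) * x)
        = (3 * η / N * ∑ i, psi (marg τ i) * a τ i ^ 3) * ((β * u τ r) ^ 2 * x) := by ring
      _ ≤ _ := h3
      _ = c * ((β * u τ r) ^ 2 * Real.exp (-(β * u τ r) ^ 3) * x) := by ring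
      _ ≤ β * (1 / 2) := by linarith
  have hmain := exp_le_exp_zero_add (b := fun τ => β * u τ r) (t := t)
    (q := fun τ => β * ((3 * η / N * ∑ i, psi (marg τ i) * a τ i ^ 3) * u τ r ^ 2))
    (fun τ => by rw [D.hstep]; ring)
    (fun τ => mul_nonneg hβ.le (mul_nonneg (D.step_nonneg τ) (sq_nonneg _)))
    (fun τ hτ => by
      have := hq τ hτ 1 zero_le_one
        (by rw [mul_one]; exact sq_mul_exp_neg_cube_le (D.neg_one_le τ r))
      linarith)
    (fun τ hτ => by
      refine hq τ hτ _ (Real.exp_pos _).le ?_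
      rw [mul_assoc, ← Real.exp_add, neg_add_eq_sub]
      exact sq_mul_exp_sub_cube_le (D.neg_one_le τ r)) τ hτ
  rw [Real.le_log_iff_exp_le (by positivity)]
  have h0 : Real.exp (β * u 0 r) ≤ 3 := by
    have h1 : β * u 0 r ≤ 1 := by
      have h1 := (abs_le.1 (D.hu0 r)).2
      have h2 := D.mul_nu_le_one
      have h3 := mul_le_mul_of_nonneg_right D.hβα D.hν
      nlinarith
    exact (Real.exp_le_exp.2 h1).trans (by linarith [Real.exp_one_lt_d9])
  have h1 : (τ : ℝ) ≤ t := by exact_mod_cast hτ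
  linarith

/-- Before any neuron reaches `N σ`, all margins agree up to a constant. -/
theorem marg_le_marg_add (D : SignalDyn N m α β η σ ν t u a marg) {τ : ℕ} (hτ : τ < t)
    (hsmall : ∀ r, u τ r ≤ N * σ) (i k : Fin N) : marg τ k ≤ marg τ i + 4 := by
  have hβ := D.hβ
  have hβα := D.hβα
  have hα : 0 < α := hβ.trans_le hβα
  have hσ := D.hσ
  obtain ⟨hai, hai'⟩ := D.ha τ i
  obtain ⟨hak, hak'⟩ := D.ha τ k
  have hlog : 0 ≤ Real.log (3 + t) :=
    Real.log_nonneg (by linarith [Nat.cast_nonneg (α := ℝ) t])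
  have hαν : 0 ≤ (α * ν) ^ 3 := pow_nonneg (mul_nonneg hα.le D.hν) 3
  have hterm : ∀ r ∈ Finset.univ, (a τ k ^ 3 - a τ i ^ 3) * u τ r ^ 3 ≤
      12 * (α - β) * σ * N * Real.log (3 + t) ^ 2 + (α * ν) ^ 3 := by
    intro r _
    have hk3 : a τ k ^ 3 ≤ α ^ 3 := by have := hβ.trans_le hak; gcongr
    have hi3 : β ^ 3 ≤ a τ i ^ 3 := by gcongr
    have hi3' : a τ i ^ 3 ≤ α ^ 3 := by have := hβ.trans_le hai; gcongr
    have hk3' : 0 ≤ a τ k ^ 3 := by have := hβ.trans_le hak; positivity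
    have hfirst : 0 ≤ 12 * (α - β) * σ * N * Real.log (3 + t) ^ 2 := by
      have : 0 ≤ α - β := by linarith
      positivity
    rcases le_total 0 (u τ r) with h | h
    · have hu1 := D.mul_le_log hτ.le r
      have hu2 : α * u τ r ≤ 2 * Real.log (3 + t) := by
        nlinarith [mul_le_mul_of_nonneg_right D.hα2β h]
      have hdiff : a τ k ^ 3 - a τ i ^ 3 ≤ 3 * α ^ 2 * (α - β) := by
        have : α ^ 3 - β ^ 3 ≤ 3 * α ^ 2 * (α - β) := by
          have : 3 * α ^ 2 * (α - β) - (α ^ 3 - β ^ 3) = (α - β) ^ 2 * (2 * α + β) := by ring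
          have : 0 ≤ (α - β) ^ 2 * (2 * α + β) := by positivity
          linarith
        linarith
      have hsq : (α * u τ r) ^ 2 ≤ (2 * Real.log (3 + t)) ^ 2 := by
        have : 0 ≤ α * u τ r := by positivity
        gcongr
      have hd : 0 ≤ α - β := by linarith
      calc _ ≤ 3 * α ^ 2 * (α - β) * u τ r ^ 3 := by gcongr
        _ = 3 * (α - β) * (u τ r * (α * u τ r) ^ 2) := by ring
        _ ≤ 3 * (α - β) * ((N * σ) * (2 * Real.log (3 + t)) ^ 2) := by
          have := hsmall r
          gcongr
        _ ≤ _ := by linarith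
    · have hneg := D.neg_le τ r
      have h1 : 0 ≤ -u τ r := by linarith
      have h2 : (-u τ r) ^ 3 ≤ ν ^ 3 := by
        have : -u τ r ≤ ν := by linarith
        gcongr
      have h3 : 0 ≤ (-u τ r) ^ 3 := by positivity
      calc (a τ k ^ 3 - a τ i ^ 3) * u τ r ^ 3 = (a τ i ^ 3 - a τ k ^ 3) * (-u τ r) ^ 3 := by ring
        _ ≤ α ^ 3 * (-u τ r) ^ 3 := by gcongr; linarith
        _ ≤ α ^ 3 * ν ^ 3 := by gcongr
        _ ≤ _ := by rw [← mul_pow]; linarith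
  have hsum := Finset.sum_le_sum hterm
  rw [Finset.sum_const, Finset.card_univ, Fintype.card_fin, nsmul_eq_mul, ← Finset.mul_sum] at hsum
  have hki := (abs_le.1 (D.hmarg τ hτ k)).2
  have hii := (abs_le.1 (D.hmarg τ hτ i)).1
  have := D.hspread
  have := D.hmν
  nlinarith

/-- The loss derivatives of every single sample sum to the order `1 / (N σ β³)`. -/
theorem sum_psi_le (D : SignalDyn N m α β η σ ν t u a marg) (i : Fin N) :
    ∑ τ ∈ Finset.range t, 3 * η / N * psi (marg τ i) ≤
      (4 * Real.exp 4 + 2) / (N * σ * β ^ 3) := by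
  classical
  have hN : (0 : ℝ) < N := by exact_mod_cast D.hN
  have hβ := D.hβ
  have hη := D.hη
  have hσ := D.hσ
  set s : ℕ → ℝ := fun τ => 3 * η / N * ∑ i, psi (marg τ i) * a τ i ^ 3 with hs
  have hs0 : ∀ τ, 0 ≤ s τ := D.step_nonneg
  have hsβ : ∀ τ, β ^ 3 * (3 * η / N * ∑ k, psi (marg τ k)) ≤ s τ := by
    intro τ
    have h1 : β ^ 3 * ∑ k, psi (marg τ k) ≤ ∑ k, psi (marg τ k) * a τ k ^ 3 := by
      rw [Finset.mul_sum]
      refine Finset.sum_le_sum fun k _ => ?_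
      have h1 := (D.ha τ k).1
      have h2 := psi_pos (marg τ k)
      rw [mul_comm]
      gcongr
    have h2 : 0 ≤ 3 * η / N := by positivity
    have := mul_le_mul_of_nonneg_left h1 h2
    simp only [hs]
    linarith
  let late : ℕ → Prop := fun τ => ∃ r, N * σ < u τ r
  have hpoint : ∀ τ ∈ Finset.range t, β ^ 3 * (3 * η / N * psi (marg τ i)) ≤
      Real.exp 4 / N * s τ + if late τ then s τ else 0 := by
    intro τ hτ
    have hτ := Finset.mem_range.1 hτ
    split_ifs with hl
    · have h1 : psi (marg τ i) ≤ ∑ k, psi (marg τ k) :=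
        Finset.single_le_sum (f := fun k => psi (marg τ k)) (fun k _ => (psi_pos _).le)
          (Finset.mem_univ i)
      have h2 : β ^ 3 * (3 * η / N * psi (marg τ i)) ≤
          β ^ 3 * (3 * η / N * ∑ k, psi (marg τ k)) := by gcongr
      have h3 : 0 ≤ Real.exp 4 / N * s τ := mul_nonneg (by positivity) (hs0 τ)
      linarith [hsβ τ]
    · have hsmall : ∀ r, u τ r ≤ N * σ := fun r => not_lt.1 fun h => hl ⟨r, h⟩
      have h1 : N * psi (marg τ i) ≤ Real.exp 4 * ∑ k, psi (marg τ k) := by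
        have h2 : ∑ k : Fin N, psi (marg τ i) ≤ ∑ k, Real.exp 4 * psi (marg τ k) :=
          Finset.sum_le_sum fun k _ =>
            psi_le_exp_mul_psi (by norm_num) (D.marg_le_marg_add hτ hsmall i k)
        rwa [Finset.sum_const, Finset.card_univ, Fintype.card_fin, nsmul_eq_mul,
          ← Finset.mul_sum] at h2
      have h3 : psi (marg τ i) ≤ Real.exp 4 / N * ∑ k, psi (marg τ k) := by
        rw [div_mul_eq_mul_div, le_div_iff₀ hN]; linarith
      calc _ ≤ β ^ 3 * (3 * η / N * (Real.exp 4 / N * ∑ k, psi (marg τ k))) := by gcongr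
        _ = Real.exp 4 / N * (β ^ 3 * (3 * η / N * ∑ k, psi (marg τ k))) := by ring
        _ ≤ Real.exp 4 / N * s τ := by gcongr; exact hsβ τ
        _ = _ := by ring
  have htotal : ∑ τ ∈ Finset.range t, s τ ≤ 4 / σ := by
    obtain ⟨r, hr⟩ := D.hinit
    have h1 := D.sum_step_le (Nat.zero_le t) r (by linarith)
    rw [Nat.Ico_zero_eq_range] at h1
    refine h1.trans ?_
    rw [div_le_div_iff₀ (by linarith) hσ]
    linarith
  have hlate : (∑ τ ∈ Finset.range t, if late τ then s τ else 0) ≤ 2 / (N * σ) := by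
    by_cases hex : ∃ τ, τ < t ∧ late τ
    · have hfind := Nat.find_spec hex
      set t₀ := Nat.find hex
      obtain ⟨ht₀, r, hr⟩ := hfind
      have hNσ : 0 < N * σ := by positivity
      have h1 := D.sum_step_le ht₀.le r (hNσ.trans hr)
      have h2 : 2 / u t₀ r ≤ 2 / (N * σ) := by gcongr
      refine le_trans ?_ (h1.trans h2)
      rw [← Finset.sum_filter]
      refine Finset.sum_le_sum_of_subset_of_nonneg ?_ fun τ _ _ => hs0 τ
      intro τ hτ
      rw [Finset.mem_filter, Finset.mem_range] at hτ
      exact Finset.mem_Ico.2 ⟨Nat.find_min' hex hτ, hτ.1⟩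
    · rw [Finset.sum_eq_zero]
      · positivity
      · intro τ hτ
        rw [if_neg fun h => hex ⟨τ, Finset.mem_range.1 hτ, h⟩]
  have hsum := Finset.sum_le_sum hpoint
  rw [Finset.sum_add_distrib, ← Finset.mul_sum, ← Finset.mul_sum, ← Finset.mul_sum] at hsum
  have h1 : Real.exp 4 / N * ∑ τ ∈ Finset.range t, s τ ≤ Real.exp 4 / N * (4 / σ) := by gcongr
  rw [le_div_iff₀ (by positivity)]
  have h2 : Real.exp 4 / N * (4 / σ) + 2 / (N * σ) = (4 * Real.exp 4 + 2) / (N * σ) := by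
    field_simp
  have h3 : β ^ 3 * (3 * η / N * ∑ τ ∈ Finset.range t, psi (marg τ i)) ≤
      (4 * Real.exp 4 + 2) / (N * σ) := by linarith
  rw [le_div_iff₀ (by positivity)] at h3
  rw [← Finset.mul_sum]
  linarith

end SignalDyn

theorem exp_four_le : Real.exp 4 ≤ 55 := by
  have h : Real.exp 4 = Real.exp 1 ^ 4 := by rw [← Real.exp_nat_mul]; norm_num
  rw [h]
  calc Real.exp 1 ^ 4 ≤ 2.7182818286 ^ 4 := by gcongr; exact Real.exp_one_lt_d9.le
    _ ≤ 55 := by norm_num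

theorem cube_rpow_two_thirds {x : ℝ} (hx : 0 ≤ x) : (x ^ ((2 : ℝ) / 3)) ^ 3 = x ^ 2 := by
  rw [← Real.rpow_natCast, ← Real.rpow_mul hx]
  norm_num

theorem cube_rpow_one_third {x : ℝ} (hx : 0 ≤ x) : (x ^ ((1 : ℝ) / 3)) ^ 3 = x := by
  rw [← Real.rpow_natCast, ← Real.rpow_mul hx]
  norm_num

theorem sqrt_le_of_le_of_one_le {x y : ℝ} (hxy : x ≤ y) (hy : 1 ≤ y) : Real.sqrt x ≤ y := by
  rw [Real.sqrt_le_left (by linarith)]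
  nlinarith

/-- The bound `x ≤ C⁻¹ * (1 / b) / L`, cleared of denominators. -/
theorem mul_mul_le_inv_of_le {x b L C : ℝ} (hb : 0 < b) (hL : 0 < L)
    (h : x ≤ C⁻¹ * (1 / b) / L) : x * b * L ≤ C⁻¹ := by
  rw [le_div_iff₀ hL, mul_one_div] at h
  have h1 : x * L * b ≤ C⁻¹ := (le_div_iff₀ hb).1 h
  linarith

namespace Setting

variable (S : Setting)

theorem one_le_N : (1 : ℝ) ≤ S.N := by exact_mod_cast S.hN

theorem one_le_m : (1 : ℝ) ≤ S.m := by exact_mod_cast S.hm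

theorem one_le_d : (1 : ℝ) ≤ S.d := by exact_mod_cast S.hd

variable {S} {C : ℝ}

theorem CondH.two_le_P (H : S.CondH C) : (2 : ℝ) ≤ S.P := by
  obtain ⟨-, -, -, -, -, -, -, -, -, -, hP, -⟩ := H
  exact_mod_cast hP

theorem CondH.one_le_T (H : S.CondH C) : (1 : ℝ) ≤ S.T := by
  obtain ⟨hC, hT, -⟩ := H
  have h0 : 0 < C * S.N / (S.eta * S.sigma0 * S.sigman ^ 3 * ((S.d : ℝ) * Real.sqrt S.d)) := by
    have := S.one_le_N
    have := S.one_le_d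
    have := S.heta
    have := S.hsigma0
    have := S.hsigman
    positivity
  have h1 : 0 < S.T := by exact_mod_cast h0.trans_le hT
  exact_mod_cast h1

theorem CondH.two_le_ratio (H : S.CondH C) : (2 : ℝ) ≤ (S.N : ℝ) * S.m * S.P / S.delta := by
  have hN := S.one_le_N
  have hm := S.one_le_m
  have hP := H.two_le_P
  have hδ := S.hdelta0
  rw [le_div_iff₀ hδ]
  have h1 : (1 : ℝ) ≤ S.N * S.m := by nlinarith
  nlinarith [S.hdelta1]

theorem CondH.half_le_log (H : S.CondH C) :
    1 / 2 ≤ Real.log ((S.T : ℝ) * S.N * S.m * S.P / S.delta) := by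
  have h2 := H.two_le_ratio
  have hT := H.one_le_T
  have h3 : (2 : ℝ) ≤ (S.T : ℝ) * S.N * S.m * S.P / S.delta := by
    have : (S.T : ℝ) * S.N * S.m * S.P / S.delta = S.T * (S.N * S.m * S.P / S.delta) := by ring
    rw [this]; nlinarith
  have := Real.log_le_log (by norm_num) h3
  linarith [Real.log_two_gt_d9]

theorem CondH.log_sixteen_nonneg (H : S.CondH C) :
    0 ≤ Real.log ((16 : ℝ) * S.N * S.m * S.P / S.delta) := by
  have h2 := H.two_le_ratio
  refine Real.log_nonneg ?_
  have : (16 : ℝ) * S.N * S.m * S.P / S.delta = 16 * (S.N * S.m * S.P / S.delta) := by ring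
  linarith

theorem CondH.log_sixteen_le (H : S.CondH C) :
    Real.log ((16 : ℝ) * S.N * S.m * S.P / S.delta) ≤
      5 * Real.log ((S.T : ℝ) * S.N * S.m * S.P / S.delta) := by
  have h2 := H.two_le_ratio
  have hT := H.one_le_T
  set X := (S.N : ℝ) * S.m * S.P / S.delta
  have e1 : (16 : ℝ) * S.N * S.m * S.P / S.delta = 2 ^ 4 * X := by simp only [X]; ring
  have e2 : (S.T : ℝ) * S.N * S.m * S.P / S.delta = S.T * X := by simp only [X]; ring
  rw [e1, e2, Real.log_mul (by norm_num) (by positivity), Real.log_mul (by positivity)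
    (by positivity), Real.log_pow]
  have h3 := Real.log_le_log (by norm_num) h2
  have h4 := Real.log_nonneg hT
  push_cast
  linarith

theorem CondH.log_le_log_dim (H : S.CondH C) :
    Real.log ((S.T : ℝ) * S.N * S.m * S.P / S.delta) ≤
      Real.log ((S.T : ℝ) * S.d * S.N * S.m * S.P / S.delta) := by
  have h2 := H.two_le_ratio
  have hT := H.one_le_T
  have hd := S.one_le_d
  set X := (S.N : ℝ) * S.m * S.P / S.delta
  have e1 : (S.T : ℝ) * S.d * S.N * S.m * S.P / S.delta = S.T * S.d * X := by simp only [X]; ring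
  have e2 : (S.T : ℝ) * S.N * S.m * S.P / S.delta = S.T * X := by simp only [X]; ring
  rw [e1, e2]
  refine Real.log_le_log (by positivity) ?_
  gcongr
  nlinarith

theorem CondH.log_width_le (H : S.CondH C) :
    Real.log ((16 : ℝ) * S.m / S.delta) ≤ Real.log ((16 : ℝ) * S.N * S.m * S.P / S.delta) := by
  have hN := S.one_le_N
  have hm := S.one_le_m
  have hP := H.two_le_P
  have hδ := S.hdelta0
  refine Real.log_le_log (by positivity) ?_
  refine div_le_div_of_nonneg_right ?_ hδ.le
  have h1 : (1 : ℝ) ≤ S.N * S.P := by nlinarith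
  nlinarith

theorem CondH.log_pairs_le (H : S.CondH C) :
    Real.log ((16 : ℝ) * S.N ^ 2 * S.P ^ 2 / S.delta) ≤
      2 * Real.log ((16 : ℝ) * S.N * S.m * S.P / S.delta) := by
  have hN := S.one_le_N
  have hm := S.one_le_m
  have hP := H.two_le_P
  have hδ := S.hdelta0
  have h2 : 2 * Real.log ((16 : ℝ) * S.N * S.m * S.P / S.delta) =
      Real.log (((16 : ℝ) * S.N * S.m * S.P / S.delta) ^ 2) := by
    rw [Real.log_pow]; push_cast; rfl
  rw [h2]
  refine Real.log_le_log (by positivity) ?_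
  rw [div_pow, div_le_div_iff₀ hδ (by positivity)]
  have h3 : S.delta ^ 2 ≤ S.delta := by nlinarith [S.hdelta1]
  have h4 : (1 : ℝ) ≤ 16 * S.m ^ 2 := by nlinarith
  calc (16 : ℝ) * S.N ^ 2 * S.P ^ 2 * S.delta ^ 2
      ≤ (16 : ℝ) * S.N ^ 2 * S.P ^ 2 * S.delta := by gcongr
    _ ≤ (16 : ℝ) * S.N ^ 2 * S.P ^ 2 * S.delta * (16 * S.m ^ 2) :=
        le_mul_of_one_le_right (by positivity) h4
    _ = _ := by ring

theorem CondH.log_horizon_le (H : S.CondH C) {t : ℕ} (ht : t ≤ S.T) :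
    Real.log (3 + t) ≤ 2 * Real.log ((S.T : ℝ) * S.N * S.m * S.P / S.delta) := by
  have h2 := H.two_le_ratio
  have hT := H.one_le_T
  have ht' : (t : ℝ) ≤ S.T := by exact_mod_cast ht
  set X := (S.N : ℝ) * S.m * S.P / S.delta
  have e2 : (S.T : ℝ) * S.N * S.m * S.P / S.delta = S.T * X := by simp only [X]; ring
  have e3 : 2 * Real.log (S.T * X) = Real.log ((S.T * X) ^ 2) := by
    rw [Real.log_pow]; push_cast; rfl
  rw [e2, e3]
  refine Real.log_le_log (by positivity) ?_
  have h3 : 2 * (S.T : ℝ) ≤ S.T * X := by nlinarith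
  nlinarith

theorem CondH.alpha_le (H : S.CondH C) (hC : 1500 ≤ C) :
    S.alpha ≤ 2 * (S.alpha - S.eps) := by
  obtain ⟨-, -, -, -, -, -, -, hε, -⟩ := H
  have h1 : S.eps ≤ C⁻¹ * S.alpha :=
    hε.le.trans (mul_le_mul_of_nonneg_left (min_le_left _ _) (by positivity))
  have h2 : C⁻¹ ≤ 1500⁻¹ := inv_anti₀ (by norm_num) hC
  have h3 := mul_le_mul_of_nonneg_right h2 S.halpha.le
  linarith [S.halpha]

theorem CondH.eta_mul_le (H : S.CondH C) (hC : 1500 ≤ C) :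
    12 * Real.exp 4 * (S.eta * S.alpha ^ 2) ≤ 1 := by
  have hl := H.half_le_log
  obtain ⟨-, -, -, -, -, hη, -⟩ := H
  have hα := S.halpha
  have h1 : S.eta * S.alpha ^ 2 * Real.log ((S.T : ℝ) * S.N * S.m * S.P / S.delta) ≤ C⁻¹ := by
    refine mul_mul_le_inv_of_le (by positivity) (by linarith) (hη.trans ?_)
    gcongr
    exact min_le_right _ _
  have h2 : C⁻¹ ≤ 1500⁻¹ := inv_anti₀ (by norm_num) hC
  have h3 : 0 < S.eta * S.alpha ^ 2 := by have := S.heta; positivity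
  have h4 := exp_four_le
  have h5 : S.eta * S.alpha ^ 2 ≤ 2 * 1500⁻¹ := by nlinarith
  nlinarith

theorem CondH.init_signal_le (H : S.CondH C) (hC : 1500 ≤ C) :
    S.m * (S.alpha * (S.sigma0 * Real.sqrt (2 * Real.log ((16 : ℝ) * S.m / S.delta)))) ^ 3 ≤ 1 := by
  have hl := H.half_le_log
  have hll := H.log_le_log_dim
  have hs := H.log_sixteen_le
  have hw := H.log_width_le
  obtain ⟨-, -, -, -, hσ, -⟩ := H
  have hα := S.halpha
  have hσ0 := S.hsigma0
  have hm := S.one_le_m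
  set Λ := Real.log ((S.T : ℝ) * S.d * S.N * S.m * S.P / S.delta)
  have hΛ : 0 < Λ := by linarith
  have h1 : S.sigma0 * (S.alpha * (S.m : ℝ) ^ ((2 : ℝ) / 3)) * Λ ≤ C⁻¹ := by
    refine mul_mul_le_inv_of_le (by positivity) hΛ (hσ.trans ?_)
    gcongr
    exact (min_le_left _ _).trans (min_le_right _ _)
  have h2 : C⁻¹ ≤ 1500⁻¹ := inv_anti₀ (by norm_num) hC
  have h3 : Real.sqrt (2 * Real.log ((16 : ℝ) * S.m / S.delta)) ≤ 10 * Λ :=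
    sqrt_le_of_le_of_one_le (by linarith) (by linarith)
  have h4 : (S.sigma0 * (S.alpha * (S.m : ℝ) ^ ((2 : ℝ) / 3)) * Λ) ^ 3 ≤ (1500⁻¹) ^ 3 := by
    have := h1.trans h2
    gcongr
  have h5 : (S.sigma0 * (S.alpha * (S.m : ℝ) ^ ((2 : ℝ) / 3)) * Λ) ^ 3 =
      (S.alpha * S.sigma0 * Λ) ^ 3 * S.m ^ 2 := by
    rw [← cube_rpow_two_thirds (x := (S.m : ℝ)) (by positivity)]; ring
  rw [h5] at h4
  have h6 : (S.m : ℝ) ≤ S.m ^ 2 := by nlinarith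
  calc _ ≤ S.m * (S.alpha * (S.sigma0 * (10 * Λ))) ^ 3 := by gcongr
    _ = 1000 * ((S.alpha * S.sigma0 * Λ) ^ 3 * S.m) := by ring
    _ ≤ 1000 * ((S.alpha * S.sigma0 * Λ) ^ 3 * S.m ^ 2) := by gcongr
    _ ≤ 1 := by norm_num at h4 ⊢; linarith

theorem CondH.init_noise_le (H : S.CondH C) (hC : 1500 ≤ C) :
    S.m * (S.P * (3 * S.sigma0 * S.sigman *
      Real.sqrt ((S.d : ℝ) * Real.log ((16 : ℝ) * S.N * S.m * S.P / S.delta))) ^ 3) ≤ 1 := by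
  have hl := H.half_le_log
  have hll := H.log_le_log_dim
  have hs := H.log_sixteen_le
  have hP := H.two_le_P
  obtain ⟨-, -, -, -, hσ, -⟩ := H
  have hσn := S.hsigman
  have hσ0 := S.hsigma0
  have hm := S.one_le_m
  have hd := S.one_le_d
  set Λ := Real.log ((S.T : ℝ) * S.d * S.N * S.m * S.P / S.delta)
  have hΛ : 0 < Λ := by linarith
  have h1 : S.sigma0 * ((S.m : ℝ) ^ ((2 : ℝ) / 3) * (S.P : ℝ) ^ ((2 : ℝ) / 3) *
      S.sigman * Real.sqrt S.d) * Λ ≤ C⁻¹ := by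
    refine mul_mul_le_inv_of_le (by positivity) hΛ (hσ.trans ?_)
    gcongr
    exact (min_le_left _ _).trans (min_le_left _ _)
  have h2 : C⁻¹ ≤ 1500⁻¹ := inv_anti₀ (by norm_num) hC
  have h3 : Real.sqrt (Real.log ((16 : ℝ) * S.N * S.m * S.P / S.delta)) ≤ 5 * Λ :=
    sqrt_le_of_le_of_one_le (by linarith) (by linarith)
  have h4 : (S.sigma0 * ((S.m : ℝ) ^ ((2 : ℝ) / 3) * (S.P : ℝ) ^ ((2 : ℝ) / 3) *
      S.sigman * Real.sqrt S.d) * Λ) ^ 3 ≤ (1500⁻¹) ^ 3 := by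
    have := h1.trans h2
    gcongr
  have h5 : (S.sigma0 * ((S.m : ℝ) ^ ((2 : ℝ) / 3) * (S.P : ℝ) ^ ((2 : ℝ) / 3) *
      S.sigman * Real.sqrt S.d) * Λ) ^ 3 =
      (S.sigma0 * S.sigman * Real.sqrt S.d * Λ) ^ 3 * (S.m ^ 2 * S.P ^ 2) := by
    rw [← cube_rpow_two_thirds (x := (S.m : ℝ)) (by positivity),
      ← cube_rpow_two_thirds (x := (S.P : ℝ)) (by positivity)]; ring
  rw [h5] at h4
  have h6 : (S.m : ℝ) ≤ S.m ^ 2 := by nlinarith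
  have h7 : (S.P : ℝ) ≤ S.P ^ 2 := by nlinarith
  rw [Real.sqrt_mul (by positivity)]
  calc _ ≤ S.m * (S.P * (3 * S.sigma0 * S.sigman * (Real.sqrt S.d * (5 * Λ))) ^ 3) := by gcongr
    _ = 3375 * ((S.sigma0 * S.sigman * Real.sqrt S.d * Λ) ^ 3 * (S.m * S.P)) := by ring
    _ ≤ 3375 * ((S.sigma0 * S.sigman * Real.sqrt S.d * Λ) ^ 3 * (S.m ^ 2 * S.P ^ 2)) := by gcongr
    _ ≤ 1 := by norm_num at h4 ⊢; linarith

theorem CondH.spread_le (H : S.CondH C) (hC : 1500 ≤ C) {t : ℕ} (ht : t ≤ S.T) :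
    12 * (S.alpha - (S.alpha - S.eps)) * S.m * S.sigma0 * S.N * Real.log (3 + t) ^ 2 ≤ 1 := by
  have hl := H.half_le_log
  have hh := H.log_horizon_le ht
  have hP := H.two_le_P
  obtain ⟨-, -, hdim, -, -, -, -, hε, -⟩ := H
  have hσ0 := S.hsigma0
  have hm := S.one_le_m
  have hd := S.one_le_d
  have hN := S.one_le_N
  have hε0 := S.heps
  set Λ := Real.log ((S.T : ℝ) * S.N * S.m * S.P / S.delta)
  have hlog : 0 ≤ Real.log (3 + t) :=
    Real.log_nonneg (by linarith [Nat.cast_nonneg (α := ℝ) t])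
  have h1 : S.eps * (S.m * S.sigma0 * S.d) ≤ C⁻¹ := by
    have h2 : S.eps ≤ C⁻¹ * (1 / (S.m * S.sigma0 * S.d)) :=
      hε.le.trans (mul_le_mul_of_nonneg_left (min_le_right _ _) (by positivity))
    rw [mul_one_div] at h2
    exact (le_div_iff₀ (by positivity)).1 h2
  have h2 : C⁻¹ ≤ 1 := inv_le_one_of_one_le₀ (by linarith)
  have h3 : 48 * S.N * Λ ^ 2 ≤ S.d := by
    refine le_trans ?_ hdim
    have hΛ2 : (1 / 4 : ℝ) ≤ Λ ^ 2 := by nlinarith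
    have hm2 : (1 : ℝ) ≤ S.m ^ 2 := by nlinarith
    have hP2 : (1 : ℝ) ≤ S.P ^ 2 := by nlinarith
    have hN2 : (S.N : ℝ) ≤ S.N ^ 2 := by nlinarith
    calc 48 * S.N * Λ ^ 2 ≤ 1500 * 1 * 1 * S.N * (Λ ^ 2 * (1 / 4)) := by
          have : 0 ≤ S.N * Λ ^ 2 := by positivity
          linarith
      _ ≤ C * S.m ^ 2 * S.P ^ 2 * S.N ^ 2 * (Λ ^ 2 * Λ ^ 2) := by gcongr
      _ = _ := by ring
  calc 12 * (S.alpha - (S.alpha - S.eps)) * S.m * S.sigma0 * S.N * Real.log (3 + t) ^ 2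
      = 12 * S.eps * S.m * S.sigma0 * S.N * Real.log (3 + t) ^ 2 := by ring
    _ ≤ 12 * S.eps * S.m * S.sigma0 * S.N * (2 * Λ) ^ 2 := by gcongr
    _ = S.eps * (S.m * S.sigma0 * (48 * S.N * Λ ^ 2)) := by ring
    _ ≤ S.eps * (S.m * S.sigma0 * S.d) := by gcongr
    _ ≤ 1 := h1.trans h2

theorem CondH.cross_le (H : S.CondH C) (hC : 1500 ≤ C) :
    S.N * (S.P * (2 * S.sigman ^ 2 *
      Real.sqrt ((S.d : ℝ) * Real.log ((16 : ℝ) * S.N ^ 2 * S.P ^ 2 / S.delta)))) ≤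
      S.sigman ^ 2 * S.d / 2 := by
  have hl := H.half_le_log
  have hp := H.log_pairs_le
  have hs := H.log_sixteen_le
  have hP := H.two_le_P
  obtain ⟨-, -, hdim, -⟩ := H
  have hm := S.one_le_m
  have hd := S.one_le_d
  have hN := S.one_le_N
  set Λ := Real.log ((S.T : ℝ) * S.N * S.m * S.P / S.delta)
  have h1 : 160 * (S.N * S.P) ^ 2 * Λ ≤ S.d := by
    refine le_trans ?_ hdim
    have hΛ3 : (1 / 8 : ℝ) ≤ Λ ^ 3 := by
      calc (1 / 8 : ℝ) = (1 / 2) ^ 3 := by norm_num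
        _ ≤ Λ ^ 3 := by gcongr
    have hm2 : (1 : ℝ) ≤ S.m ^ 2 := by nlinarith
    calc 160 * (S.N * S.P) ^ 2 * Λ ≤ 1500 * 1 * S.P ^ 2 * S.N ^ 2 * (Λ * (1 / 8)) := by
          have : 0 ≤ (S.N * S.P) ^ 2 * Λ := by positivity
          linarith
      _ ≤ C * S.m ^ 2 * S.P ^ 2 * S.N ^ 2 * (Λ * Λ ^ 3) := by gcongr
      _ = _ := by ring
  have h2 : S.N * (S.P * (4 *
      Real.sqrt ((S.d : ℝ) * Real.log ((16 : ℝ) * S.N ^ 2 * S.P ^ 2 / S.delta)))) ≤ S.d := by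
    have h3 : Real.sqrt ((S.d : ℝ) * Real.log ((16 : ℝ) * S.N ^ 2 * S.P ^ 2 / S.delta)) ≤
        S.d / (4 * (S.N * S.P)) := by
      rw [Real.sqrt_le_left (by positivity), div_pow, le_div_iff₀ (by positivity)]
      calc (S.d : ℝ) * Real.log ((16 : ℝ) * S.N ^ 2 * S.P ^ 2 / S.delta) * (4 * (S.N * S.P)) ^ 2
          ≤ (S.d : ℝ) * (10 * Λ) * (4 * (S.N * S.P)) ^ 2 := by gcongr; linarith
        _ = S.d * (160 * (S.N * S.P) ^ 2 * Λ) := by ring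
        _ ≤ S.d * S.d := by gcongr
        _ = _ := by ring
    rw [le_div_iff₀ (by positivity)] at h3
    linarith
  have := mul_le_mul_of_nonneg_left h2 (sq_nonneg S.sigman)
  linarith

theorem CondH.signal_ge (H : S.CondH C) (hC : 1500 ≤ C) (hU : S.SU = ∅) :
    4000 * Real.sqrt (Real.log ((16 : ℝ) * S.N * S.m * S.P / S.delta)) *
      (S.sigman * Real.sqrt S.d) ^ 3 ≤ S.N * (S.alpha - S.eps) ^ 3 := by
  have hl := H.half_le_log
  have hs := H.log_sixteen_le
  have hα2 := H.alpha_le hC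
  obtain ⟨-, -, -, hsig, -⟩ := H
  have hd := S.one_le_d
  have hN := S.one_le_N
  have hσn := S.hsigman
  have hα := S.halpha
  have hpun : S.pun = 0 := by simp [pun, hU]
  rw [hpun, sub_zero, mul_one, div_le_iff₀ (by positivity)] at hsig
  set Λ := Real.log ((S.T : ℝ) * S.N * S.m * S.P / S.delta)
  have h1 : (1500 * S.sigman * Real.sqrt S.d * Λ) ^ 3 ≤ S.alpha ^ 3 * S.N := by
    rw [← cube_rpow_one_third (x := (S.N : ℝ)) (by positivity), ← mul_pow]
    refine pow_le_pow_left₀ (by positivity) (le_trans ?_ hsig) 3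
    gcongr
  have h2 : S.alpha ^ 3 ≤ (2 * (S.alpha - S.eps)) ^ 3 := by gcongr
  have h3 : Real.sqrt (Real.log ((16 : ℝ) * S.N * S.m * S.P / S.delta)) ≤ 5 * Λ :=
    sqrt_le_of_le_of_one_le hs (by linarith)
  have h4 : Λ * (1 / 4) ≤ Λ ^ 3 := by
    have : (1 / 4 : ℝ) ≤ Λ ^ 2 := by nlinarith
    nlinarith
  have h5 := mul_le_mul_of_nonneg_right h2 (Nat.cast_nonneg (α := ℝ) S.N)
  have h6 : 0 ≤ (S.sigman * Real.sqrt S.d) ^ 3 := by positivity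
  have h7 := mul_le_mul_of_nonneg_left h4 h6
  have h8 := mul_le_mul_of_nonneg_right h3 h6
  have h9 : 0 ≤ (S.sigman * Real.sqrt S.d) ^ 3 * Λ := by positivity
  have h10 : (1500 * S.sigman * Real.sqrt S.d * Λ) ^ 3 =
      1500 ^ 3 * ((S.sigman * Real.sqrt S.d) ^ 3 * Λ ^ 3) := by ring
  rw [h10] at h1
  have h11 : (2 * (S.alpha - S.eps)) ^ 3 * S.N = 8 * (S.N * (S.alpha - S.eps) ^ 3) := by ring
  rw [h11] at h5
  linarith

end Setting

theorem dot_comm {d : ℕ} (a b : Fin d → ℝ) : dot a b = dot b a := dotProduct_comm a b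

theorem dot_add_left {d : ℕ} (a b c : Fin d → ℝ) : dot (a + b) c = dot a c + dot b c :=
  add_dotProduct a b c

theorem dot_smul_left {d : ℕ} (z : ℝ) (a b : Fin d → ℝ) : dot (z • a) b = z * dot a b :=
  smul_dotProduct z a b

theorem dot_smul_right {d : ℕ} (z : ℝ) (a b : Fin d → ℝ) : dot a (z • b) = z * dot a b :=
  dotProduct_smul z a b

theorem dot_sum_left {d : ℕ} {ι : Type*} (s : Finset ι) (f : ι → Fin d → ℝ) (b : Fin d → ℝ) :
    dot (∑ i ∈ s, f i) b = ∑ i ∈ s, dot (f i) b :=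
  sum_dotProduct s f b

theorem dot_e1 {d : ℕ} (hd : 0 < d) (a : Fin d → ℝ) : dot a (e1 d hd) = a ⟨0, hd⟩ := by
  simp [dot, e1]

namespace Setting

variable {S : Setting}

/-- Signal strength of the adversarial example of sample `i` at iteration `t`. -/
def advSignal (S : Setting) (t : ℕ) (i : Fin S.N) : ℝ :=
  S.y i * dot (S.xadv t i (S.sig i)) (e1 S.d S.hd)

theorem y_mul_self (i : Fin S.N) : S.y i * S.y i = 1 := by
  rcases S.hy i with h | h <;> rw [h] <;> norm_num

theorem abs_y (i : Fin S.N) : |S.y i| = 1 := by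
  rcases S.hy i with h | h <;> rw [h] <;> norm_num

theorem mem_SL (hU : S.SU = ∅) (i : Fin S.N) : i ∈ S.SL := by
  have h := S.hunion
  rw [hU, Finset.union_empty] at h
  rw [h]
  exact Finset.mem_univ i

theorem xadv_sig (hU : S.SU = ∅) (t : ℕ) (i : Fin S.N) :
    S.xadv t i (S.sig i) = (S.y i * S.advSignal t i) • e1 S.d S.hd := by
  obtain ⟨c, hc⟩ := S.hadvspan t i
  have h1 : S.xadv t i (S.sig i) = ((1 + c) * (S.alpha * S.y i)) • e1 S.d S.hd := by
    rw [← sub_add_cancel (S.xadv t i (S.sig i)) (S.x i (S.sig i)), hc, S.hsigL i (mem_SL hU i),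
      smul_smul, ← add_smul]
    congr 1
    ring
  have h2 : dot (e1 S.d S.hd) (e1 S.d S.hd) = 1 := by rw [dot_e1]; simp [e1]
  have h3 : S.y i * S.advSignal t i = (1 + c) * (S.alpha * S.y i) := by
    rw [advSignal, h1, dot_smul_left, h2, ← mul_assoc, y_mul_self]
    ring
  rw [h3, h1]

theorem sum_patches {M : Type*} [AddCommMonoid M] (i : Fin S.N) (f : Fin S.P → M) :
    ∑ p, f p = f (S.sig i) + ∑ p ∈ Finset.univ.erase (S.sig i), f p :=
  (Finset.add_sum_erase _ _ (Finset.mem_univ _)).symm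

theorem dot_xadv_sig (hU : S.SU = ∅) (t : ℕ) (i : Fin S.N) (r : Fin S.m) :
    dot (S.w t r) (S.xadv t i (S.sig i)) = S.y i * S.advSignal t i * S.wsig t r := by
  rw [xadv_sig hU, dot_smul_right, dot_e1, wsig]

theorem y_pow_three (i : Fin S.N) : S.y i ^ 3 = S.y i := by
  rw [pow_succ, sq, y_mul_self, one_mul]

theorem wsig_eq_dot (t : ℕ) (r : Fin S.m) : S.wsig t r = dot (S.w t r) (e1 S.d S.hd) :=
  (dot_e1 S.hd _).symm

/-- The margin splits into a signal part and a noise part. -/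
theorem marg_eq (hU : S.SU = ∅) (t : ℕ) (i : Fin S.N) :
    S.marg t i = S.advSignal t i ^ 3 * ∑ r, S.wsig t r ^ 3 +
      S.y i * ∑ r, ∑ p ∈ Finset.univ.erase (S.sig i), dot (S.w t r) (S.x i p) ^ 3 := by
  have h1 : netOut (S.w t) (S.xadv t i) = S.y i * (S.advSignal t i ^ 3 * ∑ r, S.wsig t r ^ 3) +
      ∑ r, ∑ p ∈ Finset.univ.erase (S.sig i), dot (S.w t r) (S.x i p) ^ 3 := by
    rw [netOut, Finset.mul_sum, Finset.mul_sum, ← Finset.sum_add_distrib]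
    refine Finset.sum_congr rfl fun r _ => ?_
    simp_rw [phi_sub_phi_neg]
    rw [sum_patches i]
    congr 1
    · rw [dot_xadv_sig hU, mul_pow, mul_pow, y_pow_three]; ring
    · refine Finset.sum_congr rfl fun p hp => ?_
      rw [S.hadvnoise t i p (Finset.ne_of_mem_erase hp)]
  rw [marg, h1, mul_add, ← mul_assoc, y_mul_self, one_mul]

/-- One gradient step tested against a vector `z`. -/
theorem dot_step (hdyn : S.ATDyn) (hU : S.SU = ∅) (t : ℕ) (r : Fin S.m) (z : Fin S.d → ℝ) :
    dot (S.w (t + 1) r) z = dot (S.w t r) z + 3 * S.eta / S.N *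
      ∑ i, psi (S.marg t i) * (S.advSignal t i ^ 3 * S.wsig t r ^ 2 * dot (e1 S.d S.hd) z +
        S.y i * ∑ p ∈ Finset.univ.erase (S.sig i),
          dot (S.w t r) (S.x i p) ^ 2 * dot (S.x i p) z) := by
  rw [hdyn, dot_add_left, dot_smul_left, dot_sum_left]
  congr 2
  refine Finset.sum_congr rfl fun i _ => ?_
  rw [dot_smul_left, dot_sum_left, sum_patches i, mul_assoc, mul_add]
  congr 2
  · rw [dot_smul_left, dot_xadv_sig hU, xadv_sig hU, dot_smul_left]
    have h := y_mul_self i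
    calc _ = (S.y i * S.y i) * (S.y i * S.y i) *
          (S.advSignal t i ^ 3 * S.wsig t r ^ 2 * dot (e1 S.d S.hd) z) := by ring
      _ = _ := by rw [h]; ring
  · congr 1
    refine Finset.sum_congr rfl fun p hp => ?_
    rw [S.hadvnoise t i p (Finset.ne_of_mem_erase hp), dot_smul_left]

theorem wsig_step (hdyn : S.ATDyn) (hU : S.SU = ∅) (t : ℕ) (r : Fin S.m) :
    S.wsig (t + 1) r = S.wsig t r +
      (3 * S.eta / S.N * ∑ i, psi (S.marg t i) * S.advSignal t i ^ 3) * S.wsig t r ^ 2 := by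
  have h := dot_step hdyn hU t r (e1 S.d S.hd)
  rw [dot_e1, dot_e1] at h
  rw [wsig, h, mul_assoc, Finset.sum_mul, wsig]
  congr 2
  refine Finset.sum_congr rfl fun i _ => ?_
  have h0 : ∑ p ∈ Finset.univ.erase (S.sig i),
      dot (S.w t r) (S.x i p) ^ 2 * dot (S.x i p) (e1 S.d S.hd) = 0 :=
    Finset.sum_eq_zero fun p hp => by rw [S.hnoiseU i p (Finset.ne_of_mem_erase hp), mul_zero]
  have h2 : dot (e1 S.d S.hd) (e1 S.d S.hd) = 1 := by rw [dot_e1]; simp [e1]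
  rw [h0, h2]
  ring

/-- Noise responses in terms of the noise coefficients. -/
theorem dot_noise_eq (hdyn : S.ATDyn) (hU : S.SU = ∅) (r : Fin S.m) {k : Fin S.N} {q : Fin S.P}
    (hq : q ≠ S.sig k) (t : ℕ) :
    dot (S.w t r) (S.x k q) = dot (S.w 0 r) (S.x k q) +
      ∑ i, ∑ p ∈ Finset.univ.erase (S.sig i),
        S.y i * S.rho i p r t * dot (S.x i p) (S.x k q) := by
  induction t with
  | zero => simp [rho]
  | succ n ih =>
    have h0 : dot (e1 S.d S.hd) (S.x k q) = 0 := by rw [dot_comm]; exact S.hnoiseU k q hq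
    rw [dot_step hdyn hU, ih, h0, add_assoc, Finset.mul_sum, ← Finset.sum_add_distrib]
    congr 1
    refine Finset.sum_congr rfl fun i _ => ?_
    rw [mul_zero, zero_add, Finset.mul_sum, Finset.mul_sum, Finset.mul_sum,
      ← Finset.sum_add_distrib]
    refine Finset.sum_congr rfl fun p _ => ?_
    rw [rho]
    ring

theorem rho_nonneg (i : Fin S.N) (j : Fin S.P) (r : Fin S.m) (t : ℕ) : 0 ≤ S.rho i j r t := by
  induction t with
  | zero => simp [rho]
  | succ n ih =>
    have := S.heta
    have := psi_pos (S.marg n i)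
    rw [rho]
    positivity

theorem rho_eq_sum (i : Fin S.N) (j : Fin S.P) (r : Fin S.m) (t : ℕ) :
    S.rho i j r t = ∑ τ ∈ Finset.range t,
      3 * S.eta / S.N * psi (S.marg τ i) * dot (S.w τ r) (S.x i j) ^ 2 := by
  induction t with
  | zero => simp [rho]
  | succ n ih => rw [rho, ih, Finset.sum_range_succ]

/-- The initialization scale of the noise responses. -/
def noiseScale (S : Setting) : ℝ :=
  3 * S.sigma0 * S.sigman *
    Real.sqrt ((S.d : ℝ) * Real.log ((16 : ℝ) * S.N * S.m * S.P / S.delta))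

theorem noiseScale_nonneg : 0 ≤ S.noiseScale := by
  have := S.hsigma0
  have := S.hsigman
  unfold noiseScale
  positivity

theorem abs_marg_sub_le (hU : S.SU = ∅) {t : ℕ} {B : ℝ}
    (hB : ∀ r i j, j ≠ S.sig i → |dot (S.w t r) (S.x i j)| ≤ B)
    (hsmall : S.m * (S.P * B ^ 3) ≤ 1) (hB0 : 0 ≤ B) (i : Fin S.N) :
    |S.marg t i - S.advSignal t i ^ 3 * ∑ r, S.wsig t r ^ 3| ≤ 1 := by
  rw [marg_eq hU, add_sub_cancel_left, abs_mul, abs_y, one_mul]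
  refine le_trans ?_ hsmall
  calc _ ≤ ∑ r, |∑ p ∈ Finset.univ.erase (S.sig i), dot (S.w t r) (S.x i p) ^ 3| :=
        Finset.abs_sum_le_sum_abs _ _
    _ ≤ ∑ r : Fin S.m, S.P * B ^ 3 := by
        refine Finset.sum_le_sum fun r _ => ?_
        calc _ ≤ ∑ p ∈ Finset.univ.erase (S.sig i), |dot (S.w t r) (S.x i p) ^ 3| :=
              Finset.abs_sum_le_sum_abs _ _
          _ ≤ ∑ p ∈ Finset.univ.erase (S.sig i), B ^ 3 := by
              refine Finset.sum_le_sum fun p hp => ?_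
              rw [abs_pow]
              exact pow_le_pow_left₀ (abs_nonneg _) (hB r i p (Finset.ne_of_mem_erase hp)) 3
          _ ≤ ∑ p : Fin S.P, B ^ 3 :=
              Finset.sum_le_sum_of_subset_of_nonneg (Finset.erase_subset _ _)
                fun _ _ _ => by positivity
          _ = S.P * B ^ 3 := by simp
    _ = S.m * (S.P * B ^ 3) := by simp

/-- The noise coefficients stay bounded as long as the noise responses do. -/
theorem rho_le {C : ℝ} (hC : 1500 ≤ C) (hdyn : S.ATDyn) (hE : S.EventE) (H : S.CondH C)
    (hU : S.SU = ∅) {t : ℕ} (ht : t ≤ S.T)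
    (hresp : ∀ τ < t, ∀ r i j, j ≠ S.sig i → |dot (S.w τ r) (S.x i j)| ≤ S.noiseScale)
    (r : Fin S.m) (i : Fin S.N) (j : Fin S.P) (hj : j ≠ S.sig i) :
    S.rho i j r t ≤ 2000 * Real.log ((16 : ℝ) * S.N * S.m * S.P / S.delta) *
      (S.sigma0 * S.sigman ^ 2 * S.d) / ((S.N : ℝ) * (S.alpha - S.eps) ^ 3) := by
  obtain ⟨-, -, -, -, h5, -, ⟨rs, hrs⟩, -⟩ := hE
  have hβ : 0 < S.alpha - S.eps := sub_pos.2 S.hepsalpha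
  have hσ0 := S.hsigma0
  have hη := S.heta
  have hN := S.one_le_N
  have hd := S.one_le_d
  have D : SignalDyn S.N S.m S.alpha (S.alpha - S.eps) S.eta S.sigma0
      (S.sigma0 * Real.sqrt (2 * Real.log ((16 : ℝ) * S.m / S.delta))) t S.wsig S.advSignal
      S.marg :=
    { hN := S.hN
      hβ := hβ
      hβα := by linarith [S.heps]
      hα2β := H.alpha_le hC
      hη := hη
      hσ := hσ0
      ha := fun τ i => S.hadvlearn τ i (mem_SL hU i)
      hstep := wsig_step hdyn hU
      hmarg := fun τ hτ i =>
        abs_marg_sub_le hU (hresp τ hτ) (H.init_noise_le hC) noiseScale_nonneg i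
      hν := by positivity
      hu0 := fun r => by rw [wsig_eq_dot]; exact h5 r
      hmν := H.init_signal_le hC
      hinit := ⟨rs, by rw [wsig_eq_dot]; exact hrs⟩
      hηα := H.eta_mul_le hC
      hspread := H.spread_le hC ht }
  have hsum := D.sum_psi_le i
  set L := Real.log ((16 : ℝ) * S.N * S.m * S.P / S.delta) with hL
  have hL0 : 0 ≤ L := H.log_sixteen_nonneg
  have hB2 : S.noiseScale ^ 2 = 9 * S.sigma0 ^ 2 * S.sigman ^ 2 * (S.d * L) := by
    rw [noiseScale, mul_pow, Real.sq_sqrt (by positivity)]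
    ring
  have h4 : Real.exp 4 ≤ 55 := exp_four_le
  calc S.rho i j r t
      = ∑ τ ∈ Finset.range t,
          3 * S.eta / S.N * psi (S.marg τ i) * dot (S.w τ r) (S.x i j) ^ 2 := rho_eq_sum i j r t
    _ ≤ ∑ τ ∈ Finset.range t, 3 * S.eta / S.N * psi (S.marg τ i) * S.noiseScale ^ 2 := by
        refine Finset.sum_le_sum fun τ hτ => ?_
        have h1 := hresp τ (Finset.mem_range.1 hτ) r i j hj
        have h2 := psi_pos (S.marg τ i)
        rw [← sq_abs (dot _ _)]
        gcongr
    _ = (∑ τ ∈ Finset.range t, 3 * S.eta / S.N * psi (S.marg τ i)) * S.noiseScale ^ 2 :=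
        (Finset.sum_mul _ _ _).symm
    _ ≤ (4 * Real.exp 4 + 2) / (S.N * S.sigma0 * (S.alpha - S.eps) ^ 3) * S.noiseScale ^ 2 := by
        gcongr
    _ = (9 * (4 * Real.exp 4 + 2)) * L * (S.sigma0 * S.sigman ^ 2 * S.d) /
          (S.N * (S.alpha - S.eps) ^ 3) := by
        rw [hB2]
        field_simp
    _ ≤ _ := by
        gcongr
        linarith

/-- Bounded noise coefficients keep the noise responses at the initialization scale. -/
theorem abs_dot_noise_le {C : ℝ} (hC : 1500 ≤ C) (hdyn : S.ATDyn) (hE : S.EventE)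
    (H : S.CondH C) (hU : S.SU = ∅) {t : ℕ} (r : Fin S.m)
    (hrho : ∀ i j, j ≠ S.sig i →
      S.rho i j r t ≤ 2000 * Real.log ((16 : ℝ) * S.N * S.m * S.P / S.delta) *
        (S.sigma0 * S.sigman ^ 2 * S.d) / ((S.N : ℝ) * (S.alpha - S.eps) ^ 3))
    (k : Fin S.N) (q : Fin S.P) (hq : q ≠ S.sig k) :
    |dot (S.w t r) (S.x k q)| ≤ S.noiseScale := by
  obtain ⟨h1, h2, -, -, -, h6, -⟩ := hE
  have hβ : 0 < S.alpha - S.eps := sub_pos.2 S.hepsalpha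
  have hσ0 := S.hsigma0
  have hσn := S.hsigman
  have hN := S.one_le_N
  have hd := S.one_le_d
  have hcross := H.cross_le hC
  have hsig := H.signal_ge hC hU
  have hinit := h6 r k q hq
  set L := Real.log ((16 : ℝ) * S.N * S.m * S.P / S.delta) with hL
  have hL0 : 0 ≤ L := H.log_sixteen_nonneg
  set R := 2000 * L * (S.sigma0 * S.sigman ^ 2 * S.d) / ((S.N : ℝ) * (S.alpha - S.eps) ^ 3)
    with hR
  have hR0 : 0 ≤ R := by positivity
  set c := 2 * S.sigman ^ 2 *
    Real.sqrt ((S.d : ℝ) * Real.log ((16 : ℝ) * S.N ^ 2 * S.P ^ 2 / S.delta)) with hc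
  have hc0 : 0 ≤ c := by positivity
  have hterm : ∀ i, ∀ p ∈ Finset.univ.erase (S.sig i),
      |S.y i * S.rho i p r t * dot (S.x i p) (S.x k q)| ≤
        R * c + if i = k then (if p = q then R * (3 * S.sigman ^ 2 * S.d / 2) else 0) else 0 := by
    intro i p hp
    have hp := Finset.ne_of_mem_erase hp
    rw [abs_mul, abs_mul, abs_y, one_mul, abs_of_nonneg (rho_nonneg i p r t)]
    have hr := hrho i p hp
    by_cases hik : i = k ∧ p = q
    · obtain ⟨rfl, rfl⟩ := hik
      rw [if_pos rfl, if_pos rfl]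
      have h3 : |dot (S.x i p) (S.x i p)| ≤ 3 * S.sigman ^ 2 * S.d / 2 := by
        have h4 := h1 i p hp
        have h5 : 0 ≤ sqnorm (S.x i p) := le_trans (by positivity) h4.1
        exact (abs_of_nonneg h5).le.trans h4.2
      have h4 : S.rho i p r t * |dot (S.x i p) (S.x i p)| ≤ R * (3 * S.sigman ^ 2 * S.d / 2) :=
        mul_le_mul hr h3 (abs_nonneg _) hR0
      have : 0 ≤ R * c := by positivity
      linarith
    · have hne : ((i, p) : Fin S.N × Fin S.P) ≠ (k, q) := fun h =>
        hik ⟨congrArg Prod.fst h, congrArg Prod.snd h⟩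
      have h4 : S.rho i p r t * |dot (S.x i p) (S.x k q)| ≤ R * c :=
        mul_le_mul hr (h2 i k p q hp hq hne) (abs_nonneg _) hR0
      have h5 : (0 : ℝ) ≤
          if i = k then (if p = q then R * (3 * S.sigman ^ 2 * S.d / 2) else 0) else 0 := by
        split_ifs <;> positivity
      linarith
  have hsum : |∑ i, ∑ p ∈ Finset.univ.erase (S.sig i),
      S.y i * S.rho i p r t * dot (S.x i p) (S.x k q)| ≤
      R * (S.N * (S.P * c)) + R * (3 * S.sigman ^ 2 * S.d / 2) := by
    calc _ ≤ ∑ i, ∑ p ∈ Finset.univ.erase (S.sig i),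
          |S.y i * S.rho i p r t * dot (S.x i p) (S.x k q)| :=
          (Finset.abs_sum_le_sum_abs _ _).trans
            (Finset.sum_le_sum fun i _ => Finset.abs_sum_le_sum_abs _ _)
      _ ≤ ∑ i, ∑ p : Fin S.P, (R * c +
          if i = k then (if p = q then R * (3 * S.sigman ^ 2 * S.d / 2) else 0) else 0) := by
          refine Finset.sum_le_sum fun i _ => (Finset.sum_le_sum (hterm i)).trans ?_
          refine Finset.sum_le_sum_of_subset_of_nonneg (Finset.erase_subset _ _) fun p _ _ => ?_
          split_ifs <;> positivity
      _ = _ := by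
          simp [Finset.sum_add_distrib]
          ring
  have hR2 : R * (2 * S.sigman ^ 2 * S.d) ≤ S.sigma0 * S.sigman * Real.sqrt (S.d * L) := by
    rw [hR, div_mul_eq_mul_div, div_le_iff₀ (by positivity), Real.sqrt_mul (by positivity)]
    have e1 : Real.sqrt S.d ^ 2 = S.d := Real.sq_sqrt (by positivity)
    have e2 : Real.sqrt L ^ 2 = L := Real.sq_sqrt hL0
    calc 2000 * L * (S.sigma0 * S.sigman ^ 2 * S.d) * (2 * S.sigman ^ 2 * S.d)
        = 2000 * Real.sqrt L ^ 2 * (S.sigma0 * S.sigman ^ 2 * Real.sqrt S.d ^ 2) *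
            (2 * S.sigman ^ 2 * Real.sqrt S.d ^ 2) := by rw [e1, e2]
      _ = S.sigma0 * S.sigman * (Real.sqrt S.d * Real.sqrt L) *
            (4000 * Real.sqrt L * (S.sigman * Real.sqrt S.d) ^ 3) := by ring
      _ ≤ _ := by gcongr
  have h3 := mul_le_mul_of_nonneg_left hcross hR0
  rw [dot_noise_eq hdyn hU r hq t]
  refine (abs_add_le _ _).trans ?_
  unfold noiseScale
  linarith

/-- Noise stability without unlearnable samples, for every large constant in Condition (H). -/
theorem noise_stability {C : ℝ} (hC : 1500 ≤ C) (hdyn : S.ATDyn) (hE : S.EventE)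
    (H : S.CondH C) (hU : S.SU = ∅) (t : ℕ) (ht : t ≤ S.T) :
    (∀ r i j, j ≠ S.sig i →
      S.rho i j r t ≤ 2000 * Real.log ((16 : ℝ) * S.N * S.m * S.P / S.delta) *
        (S.sigma0 * S.sigman ^ 2 * S.d) / ((S.N : ℝ) * (S.alpha - S.eps) ^ 3)) ∧
    ∀ r i j, j ≠ S.sig i → |dot (S.w t r) (S.x i j)| ≤ S.noiseScale := by
  induction t using Nat.strong_induction_on with
  | _ t ih =>
    have hrho := rho_le hC hdyn hE H hU ht fun τ hτ => (ih τ hτ (by omega)).2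
    exact ⟨hrho, fun r => abs_dot_noise_le hC hdyn hE H hU r (hrho r)⟩

end Setting

/-- Noise stability without unlearnable samples. On the event `E`,
in the learnable-only regime `p_un = 0` (`S_U = ∅`) and under Condition (H), for every
`t ≤ T` the noise coefficients are bounded as stated and every noise response remains
at the initialization scale. -/
theorem stmt10 :
    ∃ C0 C : ℝ, 0 < C0 ∧ 0 < C ∧
      ∀ S : Setting, S.ATDyn → S.EventE → S.CondH C → S.SU = ∅ →
        ∀ t, t ≤ S.T →
          (∀ (r : Fin S.m) (i : Fin S.N) (j : Fin S.P), j ≠ S.sig i →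
            S.rho i j r t ≤
              200 * Real.exp (2 * C0 ^ 3) * Real.log ((16 : ℝ) * S.N * S.m * S.P / S.delta) *
                (S.sigma0 * S.sigman ^ 2 * S.d) / ((S.N : ℝ) * (S.alpha - S.eps) ^ 3)) ∧
          (∀ (r : Fin S.m) (i : Fin S.N) (j : Fin S.P), j ≠ S.sig i →
            |dot (S.w t r) (S.x i j)| ≤
              3 * S.sigma0 * S.sigman *
                Real.sqrt ((S.d : ℝ) * Real.log ((16 : ℝ) * S.N * S.m * S.P / S.delta))) := by
  refine ⟨2, 1500, by norm_num, by norm_num, fun S hdyn hE H hU t ht => ?_⟩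
  obtain ⟨hrho, hresp⟩ := Setting.noise_stability le_rfl hdyn hE H hU t ht
  refine ⟨fun r i j hj => (hrho r i j hj).trans ?_, hresp⟩
  have hβ : 0 < S.alpha - S.eps := sub_pos.2 S.hepsalpha
  have hσ0 := S.hsigma0
  have hL := H.log_sixteen_nonneg
  have hexp := Real.add_one_le_exp (2 * (2 : ℝ) ^ 3)
  gcongr
  linarith

end AD

end
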